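/- Let φ = (1+√5)/2 and define R(x) = 1 if 1 ≤ x < φ, R(x) = 3/2 if φ ≤ x < 2, and R(x) = ⌊x⌋ if x ≥ 2. Let v > 0 and let S be a finite multiset of real numbers, each at least 1, containing at least one element y with φ ≤ y < 2. If 1 + ∑_{x ∈ S} x > φ·v, then ∑_{x ∈ S} R(x) + 1/2 > v. -/

import Mathlib

/-!
STATEMENT 11: For the rounding function `R` from the paper's LPT analysis:
if a finite multiset `S` of reals, each at least `1`, contains a medium job
(an element of `[φ, 2)`) and `1 + ∑_{x ∈ S} x > φ·v` for some `v > 0`, then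
`∑_{x ∈ S} R x + 1/2 > v`, where `φ = (1+√5)/2`.
-/

/-- The rounding function from the paper's analysis of LPT:
`R x = 1` if `1 ≤ x < φ`, `R x = 3/2` if `φ ≤ x < 2`, `R x = ⌊x⌋` if `x ≥ 2`,
where `φ = (1+√5)/2`. -/
noncomputable def R (x : ℝ) : ℝ :=
  if x < (1 + Real.sqrt 5) / 2 then 1
  else if x < 2 then 3 / 2
  else (⌊x⌋ : ℝ)

/-- Every element is at most `φ` times its rounded value. -/
theorem le_phi_mul_R (x : ℝ) : x ≤ (1 + Real.sqrt 5) / 2 * R x := by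
  have h5 : (2.2 : ℝ) < Real.sqrt 5 := Real.lt_sqrt_of_sq_lt (by norm_num)
  unfold R
  split_ifs with h1 h2
  · linarith
  · linarith
  · have hf : (2 : ℤ) ≤ ⌊x⌋ := Int.le_floor.mpr (by push_cast; linarith)
    have hf' : (2 : ℝ) ≤ (⌊x⌋ : ℝ) := by exact_mod_cast hf
    have hlt := Int.lt_floor_add_one x
    nlinarith

theorem sum_le_phi_mul (T : Multiset ℝ) :
    T.sum ≤ (1 + Real.sqrt 5) / 2 * (T.map R).sum := by
  induction T using Multiset.induction_on with
  | empty => simp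
  | cons a T ih =>
    simp only [Multiset.map_cons, Multiset.sum_cons]
    have := le_phi_mul_R a
    linarith

/-- If `S` (a finite multiset of reals, each at least `1`) contains a medium
job `y ∈ [φ, 2)` and `1 + ∑_{x ∈ S} x > φ·v`, then
`∑_{x ∈ S} R x + 1/2 > v`. -/
theorem medium_job_rounded_bound (v : ℝ) (hv : 0 < v)
    (S : Multiset ℝ) (hS : ∀ x ∈ S, (1 : ℝ) ≤ x)
    (hmed : ∃ y ∈ S, (1 + Real.sqrt 5) / 2 ≤ y ∧ y < 2)
    (h : 1 + S.sum > (1 + Real.sqrt 5) / 2 * v) :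
    (S.map R).sum + 1 / 2 > v := by
  obtain ⟨y, hy, hy1, hy2⟩ := hmed
  obtain ⟨T, rfl⟩ := Multiset.exists_cons_of_mem hy
  have h5 : (2.2 : ℝ) < Real.sqrt 5 := Real.lt_sqrt_of_sq_lt (by norm_num)
  have hR : R y = 3 / 2 := by
    unfold R
    rw [if_neg (not_lt.mpr hy1), if_pos hy2]
  have hT := sum_le_phi_mul T
  simp only [Multiset.map_cons, Multiset.sum_cons, hR] at h ⊢
  by_contra hc
  have hc' := not_lt.mp hc
  have := mul_le_mul_of_nonneg_left hc' (by linarith : (0 : ℝ) ≤ (1 + Real.sqrt 5) / 2)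
  linarith
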